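/- The optimal values of the continuous-time dual SOS approximations converge monotonically from above to the optimal value of the continuous-time dual LP: d_{k+1}* ≤ d_k*, d_k* ≥ d* for all k, and lim_{k→∞} d_k* = d*. -/

import Mathlib

open MeasureTheory

/-- A polynomial is a sum of squares. -/
def IsSOS {σ : Type*} (p : MvPolynomial σ ℝ) : Prop :=
  ∃ (k : ℕ) (q : Fin k → MvPolynomial σ ℝ), p = ∑ i, (q i) ^ 2

/-- The basic closed semialgebraic set `{x : ∀ i, gᵢ(x) ≥ 0}`. -/
def semiSet {n nX : ℕ} (g : Fin nX → MvPolynomial (Fin n) ℝ) : Set (Fin n → ℝ) :=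
  {x | ∀ i, 0 ≤ MvPolynomial.eval x (g i)}

/-- Evaluation of the polynomial map `f` with components `F i ∈ ℝ[x, u]`. -/
noncomputable def polyMapEval {n m : ℕ} (F : Fin n → MvPolynomial (Fin n ⊕ Fin m) ℝ)
    (x : Fin n → ℝ) (u : Fin m → ℝ) : Fin n → ℝ :=
  fun i => MvPolynomial.eval (Sum.elim x u) (F i)

/-- Feasibility of a pair `(v, w)` (with `v` continuously differentiable and `w`
continuous) for the continuous-time dual LP. -/
def DualFeasC {n m nX nU : ℕ} (g : Fin nX → MvPolynomial (Fin n) ℝ)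
    (h : Fin nU → MvPolynomial (Fin m) ℝ)
    (F : Fin n → MvPolynomial (Fin n ⊕ Fin m) ℝ)
    (β : ℝ) (v w : (Fin n → ℝ) → ℝ) : Prop :=
  ContDiff ℝ 1 v ∧ Continuous w ∧
  (∀ x ∈ semiSet g, ∀ u ∈ semiSet h, fderiv ℝ v x (polyMapEval F x u) ≤ β * v x) ∧
  (∀ x ∈ semiSet g, v x + 1 ≤ w x) ∧
  (∀ x ∈ semiSet g, 0 ≤ w x)

/-- The optimal value `d*` of the continuous-time dual LP. -/
noncomputable def dualValC {n m nX nU : ℕ} (g : Fin nX → MvPolynomial (Fin n) ℝ)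
    (h : Fin nU → MvPolynomial (Fin m) ℝ)
    (F : Fin n → MvPolynomial (Fin n ⊕ Fin m) ℝ) (β : ℝ) : ℝ :=
  sInf {r : ℝ | ∃ v w, DualFeasC g h F β v w ∧ r = ∫ x in semiSet g, w x ∂volume}

/-- `k`-feasibility of a pair of polynomials `(v, w)` for the `k`-th continuous-time
dual SOS (Putinar) approximation. -/
def KFeasC {n m nX nU : ℕ} (g : Fin nX → MvPolynomial (Fin n) ℝ)
    (h : Fin nU → MvPolynomial (Fin m) ℝ)
    (F : Fin n → MvPolynomial (Fin n ⊕ Fin m) ℝ)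
    (β : ℝ) (k : ℕ) (v w : MvPolynomial (Fin n) ℝ) : Prop :=
  v.totalDegree ≤ 2 * k ∧ w.totalDegree ≤ 2 * k ∧
  ∃ (q0 : MvPolynomial (Fin n ⊕ Fin m) ℝ) (q : Fin nX → MvPolynomial (Fin n ⊕ Fin m) ℝ)
    (r : Fin nU → MvPolynomial (Fin n ⊕ Fin m) ℝ)
    (p0 : MvPolynomial (Fin n) ℝ) (p : Fin nX → MvPolynomial (Fin n) ℝ)
    (s0 : MvPolynomial (Fin n) ℝ) (s : Fin nX → MvPolynomial (Fin n) ℝ),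
    IsSOS q0 ∧ (∀ i, IsSOS (q i)) ∧ (∀ j, IsSOS (r j)) ∧
    IsSOS p0 ∧ (∀ i, IsSOS (p i)) ∧ IsSOS s0 ∧ (∀ i, IsSOS (s i)) ∧
    q0.totalDegree ≤ 2 * k * max 1 (Finset.univ.sup fun i => (F i).totalDegree) ∧
    (∀ i, (q i * MvPolynomial.rename Sum.inl (g i)).totalDegree
      ≤ 2 * k * max 1 (Finset.univ.sup fun i => (F i).totalDegree)) ∧
    (∀ j, (r j * MvPolynomial.rename Sum.inr (h j)).totalDegree
      ≤ 2 * k * max 1 (Finset.univ.sup fun i => (F i).totalDegree)) ∧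
    p0.totalDegree ≤ 2 * k ∧ (∀ i, (p i * g i).totalDegree ≤ 2 * k) ∧
    s0.totalDegree ≤ 2 * k ∧ (∀ i, (s i * g i).totalDegree ≤ 2 * k) ∧
    MvPolynomial.C β * MvPolynomial.rename Sum.inl v
        - ∑ i, MvPolynomial.rename Sum.inl (MvPolynomial.pderiv i v) * F i
      = q0 + ∑ i, q i * MvPolynomial.rename Sum.inl (g i)
          + ∑ j, r j * MvPolynomial.rename Sum.inr (h j) ∧
    w - v - 1 = p0 + ∑ i, p i * g i ∧
    w = s0 + ∑ i, s i * g i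

/-- The optimal value `d_k*` of the `k`-th continuous-time dual SOS approximation. -/
noncomputable def sosValC {n m nX nU : ℕ} (g : Fin nX → MvPolynomial (Fin n) ℝ)
    (h : Fin nU → MvPolynomial (Fin m) ℝ)
    (F : Fin n → MvPolynomial (Fin n ⊕ Fin m) ℝ) (β : ℝ) (k : ℕ) : ℝ :=
  sInf {r : ℝ | ∃ v w, KFeasC g h F β k v w ∧
    r = ∫ x in semiSet g, MvPolynomial.eval x w ∂volume}

/-!
Only the upper bound on the SOS values needs an argument. Adding to a feasible `v` a small constant
of the sign of `β` leaves `∇v` alone and increases `β v`, so together with a shift of `w` every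
feasible pair becomes one that satisfies all constraints with uniform slack, at an arbitrarily small
cost. The slack survives the replacement of `(v, w)` by polynomials that are close on the compact
set `X`, in `C¹` for `v`: convolving `v`, cut off to have compact support, with a polynomial gives a
polynomial, and by Weierstrass polynomials approximate mollifiers uniformly on compact sets.

The polynomial pair now satisfies strict inequalities, which by Putinar's Positivstellensatz are
certified by sums of squares, so that it is `k`-feasible once `k` exceeds the degrees of the
certificate. Putinar's theorem follows from the Kadison–Dubois argument: an element `f` outside an
Archimedean quadratic module `M` is separated from it by a state that is nonpositive at `f`; by
compactness and Krein–Milman this state can be taken extreme among the states of `M`; and extreme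
states are multiplicative, hence are evaluations at points of the set where `M` is nonnegative.
-/

/-! ### Archimedean quadratic modules -/

/-- A quadratic module of a commutative ring: an additive submonoid containing `1` and closed under
multiplication by squares. It plays the role of a cone of formally nonnegative elements. -/
structure QuadraticModule (A : Type*) [CommRing A] extends AddSubmonoid A where
  one_mem' : (1 : A) ∈ carrier
  sq_mul_mem' : ∀ (a : A) {b : A}, b ∈ carrier → a ^ 2 * b ∈ carrier

namespace QuadraticModule

section CommRing

variable {A B : Type*} [CommRing A] [CommRing B]

instance : SetLike (QuadraticModule A) A where
  coe M := M.carrier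
  coe_injective M N h := by
    cases M
    cases N
    congr
    exact SetLike.coe_injective h

instance : AddSubmonoidClass (QuadraticModule A) A where
  add_mem {M} := M.add_mem'
  zero_mem M := M.zero_mem'

instance : OneMemClass (QuadraticModule A) A where
  one_mem M := M.one_mem'

theorem sq_mul_mem (M : QuadraticModule A) (a : A) {b : A} (hb : b ∈ M) : a ^ 2 * b ∈ M :=
  M.sq_mul_mem' a hb

theorem sq_mem (M : QuadraticModule A) (a : A) : a ^ 2 ∈ M := by
  simpa using M.sq_mul_mem a (one_mem M)

/-- The preimage of a quadratic module under a ring homomorphism, used to transport memberships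
between polynomial rings. -/
def comap (φ : A →+* B) (M : QuadraticModule B) : QuadraticModule A where
  __ := M.toAddSubmonoid.comap φ
  one_mem' := show φ 1 ∈ M from map_one φ ▸ one_mem M
  sq_mul_mem' a b hb := show φ (a ^ 2 * b) ∈ M by
    rw [map_mul, map_pow]
    exact M.sq_mul_mem (φ a) hb

/-- The quadratic module of nonnegative elements of an ordered ring. -/
def nonneg (R : Type*) [CommRing R] [LinearOrder R] [IsStrictOrderedRing R] :
    QuadraticModule R where
  __ := AddSubmonoid.nonneg R
  one_mem' := zero_le_one' R
  sq_mul_mem' a _ hb := mul_nonneg (sq_nonneg a) hb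

end CommRing

variable {A : Type*} [CommRing A] [Algebra ℝ A] {M : QuadraticModule A}

theorem smul_mem (M : QuadraticModule A) {c : ℝ} (hc : 0 ≤ c) {a : A} (ha : a ∈ M) :
    c • a ∈ M := by
  have h := M.sq_mul_mem (algebraMap ℝ A √c) ha
  rwa [← map_pow, Real.sq_sqrt hc, ← Algebra.smul_def] at h

theorem algebraMap_mem (M : QuadraticModule A) {c : ℝ} (hc : 0 ≤ c) : algebraMap ℝ A c ∈ M := by
  rw [Algebra.algebraMap_eq_smul_one]
  exact M.smul_mem hc (one_mem M)

theorem algebraMap_sub_mem_mono {N K : ℝ} (hNK : N ≤ K) {a : A} (ha : algebraMap ℝ A N - a ∈ M) :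
    algebraMap ℝ A K - a ∈ M := by
  convert! add_mem ha (M.algebraMap_mem (sub_nonneg.2 hNK)) using 1
  rw [map_sub]
  ring

/-- A quadratic module of a real algebra, seen as a convex cone, so that separation theorems for
cones apply to it. -/
def toPointedCone (M : QuadraticModule A) : PointedCone ℝ A where
  __ := M.toAddSubmonoid
  smul_mem' c _ ha := M.smul_mem c.2 ha

/-- A quadratic module `M` of a real algebra is Archimedean if every element `a` is bounded above
by a real constant `N` for the preorder `a ≤ b ↔ b - a ∈ M`. -/
def IsArchimedean (M : QuadraticModule A) : Prop :=
  ∀ a : A, ∃ N : ℝ, algebraMap ℝ A N - a ∈ M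

/-- The subalgebra of the elements whose square is bounded above by a real constant for the preorder
defined by `M`. It is the tool to check the Archimedean property on generators only. -/
def boundedSubalgebra (M : QuadraticModule A) : Subalgebra ℝ A where
  carrier := {a | ∃ N : ℝ, algebraMap ℝ A N - a ^ 2 ∈ M}
  algebraMap_mem' c := ⟨c ^ 2, by simp⟩
  add_mem' := by
    rintro a b ⟨N, hN⟩ ⟨K, hK⟩
    refine ⟨2 * N + 2 * K, ?_⟩
    convert! add_mem (add_mem (add_mem hN hN) (add_mem hK hK)) (M.sq_mem (a - b)) using 1
    simp only [two_mul, map_add]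
    ring
  mul_mem' := by
    rintro a b ⟨N, hN⟩ ⟨K, hK⟩
    refine ⟨|K| * N, ?_⟩
    have hK' := algebraMap_sub_mem_mono (le_abs_self K) hK
    convert! add_mem (M.smul_mem (abs_nonneg K) hN) (M.sq_mul_mem a hK') using 1
    rw [map_mul, Algebra.smul_def]
    ring

theorem exists_sub_mem_of_mem_boundedSubalgebra {a : A} (ha : a ∈ M.boundedSubalgebra) :
    ∃ N : ℝ, algebraMap ℝ A N - a ∈ M := by
  obtain ⟨N, hN⟩ := ha
  refine ⟨2⁻¹ * (N + 1), ?_⟩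
  -- `2 a ≤ a² + 1 ≤ N + 1`
  convert! M.smul_mem (c := 2⁻¹) (by norm_num) (add_mem hN (M.sq_mem (a - 1))) using 1
  have htwo : (2⁻¹ : ℝ) • (2 * a) = a := by
    rw [two_mul, ← two_smul ℝ a, inv_smul_smul₀ two_ne_zero]
  rw [show algebraMap ℝ A N - a ^ 2 + (a - 1) ^ 2 = algebraMap ℝ A (N + 1) - 2 * a by
    rw [map_add, map_one]; ring, smul_sub, htwo, map_mul, Algebra.smul_def]

theorem isArchimedean_of_adjoin_eq_top {s : Set A} (hs : Algebra.adjoin ℝ s = ⊤)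
    (hM : ∀ a ∈ s, ∃ N : ℝ, algebraMap ℝ A N - a ^ 2 ∈ M) : M.IsArchimedean := fun _ =>
  exists_sub_mem_of_mem_boundedSubalgebra <|
    Algebra.adjoin_le (S := M.boundedSubalgebra) hM (hs ▸ Algebra.mem_top)

theorem IsArchimedean.mem_of_neg_one_mem (hM : M.IsArchimedean) (h : (-1 : A) ∈ M) (a : A) :
    a ∈ M := by
  obtain ⟨N, hN⟩ := hM (-a)
  have hN' := M.smul_mem (abs_nonneg N) h
  convert! add_mem (algebraMap_sub_mem_mono (le_abs_self N) hN) hN' using 1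
  rw [Algebra.algebraMap_eq_smul_one, smul_neg]
  abel

/-- A state of a quadratic module: a normalized linear functional that is nonnegative on it. -/
structure IsState (M : QuadraticModule A) (φ : A →ₗ[ℝ] ℝ) : Prop where
  map_one : φ 1 = 1
  nonneg : ∀ a ∈ M, 0 ≤ φ a

/-- The states of `M`, encoded as a subset of the space `A → ℝ` of all functions, whose product
topology provides the pointwise topology needed for the Krein–Milman theorem. -/
def stateSpace (M : QuadraticModule A) : Set (A → ℝ) :=
  (fun φ : A →ₗ[ℝ] ℝ => ⇑φ) '' {φ | M.IsState φ}

theorem IsState.inv_smul {φ : A →ₗ[ℝ] ℝ} (hφ : ∀ a ∈ M, 0 ≤ φ a) (h : 0 < φ 1) :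
    M.IsState ((φ 1)⁻¹ • φ) where
  map_one := inv_mul_cancel₀ h.ne'
  nonneg a ha := mul_nonneg (inv_nonneg.2 h.le) (hφ a ha)

theorem IsState.map_le {φ : A →ₗ[ℝ] ℝ} (hφ : M.IsState φ) {a : A} {N : ℝ}
    (ha : algebraMap ℝ A N - a ∈ M) : φ a ≤ N := by
  have h := hφ.nonneg _ ha
  rwa [map_sub, Algebra.algebraMap_eq_smul_one, map_smul, hφ.map_one, smul_eq_mul, mul_one,
    sub_nonneg] at h

theorem IsArchimedean.isCompact_stateSpace (hM : M.IsArchimedean) : IsCompact M.stateSpace := by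
  choose N hN using hM
  have hclosed : IsClosed M.stateSpace := by
    have heq : M.stateSpace = Set.range (fun φ : A →ₗ[ℝ] ℝ => ⇑φ) ∩
        ({φ | φ 1 = 1} ∩ ⋂ a ∈ M, {φ | 0 ≤ φ a}) := by
      ext ψ
      constructor
      · rintro ⟨φ, hφ, rfl⟩
        exact ⟨⟨φ, rfl⟩, hφ.map_one, Set.mem_iInter₂.2 hφ.nonneg⟩
      · rintro ⟨⟨φ, rfl⟩, hone, hnonneg⟩
        exact ⟨φ, ⟨hone, Set.mem_iInter₂.1 hnonneg⟩, rfl⟩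
    rw [heq]
    exact (LinearMap.isClosed_range_coe A ℝ (RingHom.id ℝ)).inter
      ((isClosed_eq (continuous_apply 1) continuous_const).inter
        (isClosed_biInter fun _ _ => isClosed_le continuous_const (continuous_apply _)))
  have hbox : IsCompact (Set.univ.pi fun a => Set.Icc (-N (-a)) (N a)) :=
    isCompact_univ_pi fun _ => isCompact_Icc
  refine hbox.of_isClosed_subset hclosed ?_
  rintro _ ⟨φ, hφ, rfl⟩ a -
  have hneg := hφ.map_le (hN (-a))
  rw [map_neg] at hneg
  exact ⟨neg_le.1 hneg, hφ.map_le (hN a)⟩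

end QuadraticModule

theorem exists_nonneg_linearMap_of_orderUnit {E : Type*} [AddCommGroup E] [Module ℝ E]
    {C : PointedCone ℝ E} {e : E} (he : ∀ x, ∃ N : ℝ, N • e + x ∈ C) (hneg : -e ∉ C) :
    ∃ φ : E →ₗ[ℝ] ℝ, φ e = 1 ∧ ∀ x ∈ C, 0 ≤ φ x := by
  have he₀ : e ≠ 0 := fun h => hneg (by simp [h])
  let f : E →ₗ.[ℝ] ℝ := LinearPMap.mkSpanSingleton e 1 he₀
  have hmem (c : ℝ) : c • e ∈ f.domain := Submodule.mem_span_singleton.2 ⟨c, rfl⟩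
  have hf (c : ℝ) : f ⟨c • e, hmem c⟩ = c :=
    (LinearPMap.mkSpanSingleton'_apply e (1 : ℝ) _ c (hmem c)).trans (mul_one c)
  have hf_nonneg : ∀ x : f.domain, (x : E) ∈ C → 0 ≤ f x := by
    rintro ⟨x, hx⟩ hxC
    obtain ⟨c, rfl⟩ := Submodule.mem_span_singleton.1 hx
    rw [hf]
    by_contra! hc
    refine hneg ?_
    have h := C.smul_mem (inv_nonneg.2 (neg_nonneg.2 hc.le)) hxC
    rwa [smul_smul, inv_neg, neg_mul, inv_mul_cancel₀ hc.ne, neg_one_smul] at h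
  obtain ⟨φ, hφ, hφC⟩ := riesz_extension C f hf_nonneg fun x =>
    (he x).imp' (fun N => ⟨N • e, hmem N⟩) fun _ h => h
  have hφe : φ ((1 : ℝ) • e) = 1 := (hφ ⟨_, hmem 1⟩).trans (hf 1)
  exact ⟨φ, by rwa [one_smul] at hφe, hφC⟩

/-! ### Extreme states and the Kadison–Dubois theorem -/

theorem antitone_of_convex_of_bddAbove {x : ℕ → ℝ}
    (hconv : ∀ j, x (j + 1) - x j ≤ x (j + 2) - x (j + 1)) (hbdd : BddAbove (Set.range x)) :
    Antitone x := by
  refine antitone_nat_of_succ_le fun i => ?_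
  by_contra! hi
  set d := x (i + 1) - x i
  have hdiff (j : ℕ) : d ≤ x (i + j + 1) - x (i + j) := by
    induction j with
    | zero => exact le_rfl
    | succ j ih => exact ih.trans (hconv (i + j))
  have hlinear (j : ℕ) : x i + j * d ≤ x (i + j) := by
    induction j with
    | zero => simp
    | succ j ih =>
      have h := hdiff j
      rw [← add_assoc]
      push_cast
      linarith
  obtain ⟨b, hb⟩ := hbdd
  obtain ⟨j, hj⟩ := exists_nat_gt ((b - x i) / d)
  rw [div_lt_iff₀ (sub_pos.2 hi)] at hj
  linarith [hlinear j, hb ⟨i + j, rfl⟩]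

namespace QuadraticModule

variable {A : Type*} [CommRing A] [Algebra ℝ A] {M : QuadraticModule A}

theorem IsArchimedean.exists_isState_nonpos (hM : M.IsArchimedean) {f : A} (hf : f ∉ M) :
    ∃ φ : A →ₗ[ℝ] ℝ, M.IsState φ ∧ φ f ≤ 0 := by
  let C : PointedCone ℝ A := M.toPointedCone ⊔ PointedCone.hull ℝ {-f}
  have hMC : ∀ a ∈ M, a ∈ C := fun a ha => Submodule.mem_sup_left (S := M.toPointedCone) ha
  have hfC : -f ∈ C := Submodule.mem_sup_right (Submodule.mem_span_singleton_self (-f))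
  have hneg : (-1 : A) ∉ C := by
    intro h
    obtain ⟨m, hm, z, hz, hmz⟩ := Submodule.mem_sup.1 h
    obtain ⟨⟨t, ht⟩, rfl⟩ := Submodule.mem_span_singleton.1 hz
    change m + t • -f = -1 at hmz
    have htf : t • f = m + 1 := by
      rw [smul_neg] at hmz
      linear_combination -hmz
    rcases ht.eq_or_lt with rfl | htpos
    · rw [zero_smul] at htf
      exact hf (hM.mem_of_neg_one_mem (eq_neg_of_add_eq_zero_left htf.symm ▸ hm) f)
    · have h := M.smul_mem (inv_nonneg.2 ht) (add_mem hm (one_mem M))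
      rw [← htf, inv_smul_smul₀ htpos.ne'] at h
      exact hf h
  obtain ⟨φ, hφ, hφC⟩ := exists_nonneg_linearMap_of_orderUnit (C := C) (e := 1) (fun a => by
    obtain ⟨N, hN⟩ := hM (-a)
    rw [Algebra.algebraMap_eq_smul_one, sub_neg_eq_add] at hN
    exact ⟨N, hMC _ hN⟩) hneg
  refine ⟨φ, ⟨hφ, fun a ha => hφC a (hMC a ha)⟩, ?_⟩
  have h := hφC _ hfC
  rwa [map_neg, neg_nonneg] at h

/- The sequence `j ↦ φ (a ^ (2 * j) * m)` is convex, because `(a ^ 2 - 1) ^ 2 * m ∈ M`, and bounded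
above, because `m` is; hence it decreases. -/
theorem IsArchimedean.map_sq_mul_le (hM : M.IsArchimedean) {φ : A →ₗ[ℝ] ℝ}
    (hφ : ∀ a ∈ M, 0 ≤ φ a) {a : A} (ha : 1 - a ^ 2 ∈ M) {m : A} (hm : m ∈ M) :
    φ (a ^ 2 * m) ≤ φ m := by
  obtain ⟨N, hN⟩ := hM m
  have hpow (j : ℕ) : φ (a ^ (2 * j)) ≤ φ 1 := by
    induction j with
    | zero => simp
    | succ j ih =>
      have h := hφ _ (M.sq_mul_mem (a ^ j) ha)
      rw [show (a ^ j) ^ 2 * (1 - a ^ 2) = a ^ (2 * j) - a ^ (2 * (j + 1)) by ring, map_sub] at h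
      linarith
  have hbound (j : ℕ) : φ (a ^ (2 * j) * m) ≤ |N| * φ 1 := by
    have h := hφ _ (M.sq_mul_mem (a ^ j) (algebraMap_sub_mem_mono (le_abs_self N) hN))
    rw [show (a ^ j) ^ 2 * (algebraMap ℝ A |N| - m) = |N| • a ^ (2 * j) - a ^ (2 * j) * m by
      rw [Algebra.smul_def]; ring, map_sub, map_smul, smul_eq_mul] at h
    have := mul_le_mul_of_nonneg_left (hpow j) (abs_nonneg N)
    linarith
  have hanti : Antitone fun j : ℕ => φ (a ^ (2 * j) * m) := by
    refine antitone_of_convex_of_bddAbove (fun j => ?_)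
      ⟨|N| * φ 1, Set.forall_mem_range.2 hbound⟩
    have h := hφ _ (M.sq_mul_mem (a ^ j * (a ^ 2 - 1)) hm)
    rwa [show (a ^ j * (a ^ 2 - 1)) ^ 2 * m = (a ^ (2 * (j + 2)) * m - a ^ (2 * (j + 1)) * m)
      - (a ^ (2 * (j + 1)) * m - a ^ (2 * j) * m) by ring, map_sub, sub_nonneg, map_sub,
      map_sub] at h
  simpa using hanti zero_le_one

theorem IsArchimedean.exists_map_sq_mul_le (hM : M.IsArchimedean) {φ : A →ₗ[ℝ] ℝ}
    (hφ : ∀ a ∈ M, 0 ≤ φ a) (a : A) : ∃ K > 0, ∀ m ∈ M, φ (a ^ 2 * m) ≤ K * φ m := by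
  obtain ⟨N, hN⟩ := hM (a ^ 2)
  set c := max N 1
  have hc : 0 < c ^ 2 := pow_pos (zero_lt_one.trans_le (le_max_right N 1)) 2
  have hNc : N ≤ c ^ 2 := (le_max_left N 1).trans (le_self_pow₀ (le_max_right N 1) two_ne_zero)
  have hsq : (c⁻¹ • a) ^ 2 = (c ^ 2)⁻¹ • a ^ 2 := by rw [smul_pow, inv_pow]
  have hmem : 1 - (c⁻¹ • a) ^ 2 ∈ M := by
    convert! M.smul_mem (inv_nonneg.2 hc.le) (algebraMap_sub_mem_mono hNc hN) using 1
    rw [hsq, smul_sub, Algebra.algebraMap_eq_smul_one, inv_smul_smul₀ hc.ne']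
  refine ⟨c ^ 2, hc, fun m hm => ?_⟩
  have h := hM.map_sq_mul_le hφ hmem hm
  rwa [hsq, smul_mul_assoc, map_smul, smul_eq_mul, inv_mul_le_iff₀ hc] at h

theorem eq_smul_of_add_eq_smul_of_mem_extremePoints {φ ψ₁ ψ₂ : A →ₗ[ℝ] ℝ}
    (hφ : ⇑φ ∈ M.stateSpace.extremePoints ℝ) {c : ℝ} (hsum : ψ₁ + ψ₂ = c • φ)
    (hψ₁ : ∀ a ∈ M, 0 ≤ ψ₁ a) (hψ₂ : ∀ a ∈ M, 0 ≤ ψ₂ a) (hψ₁' : 0 < ψ₁ 1) (hψ₂' : 0 < ψ₂ 1) :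
    ψ₁ = ψ₁ 1 • φ := by
  obtain ⟨⟨φ, hstate, hφ'⟩, hext⟩ := hφ
  obtain rfl := DFunLike.coe_injective hφ'
  have hc : ψ₁ 1 + ψ₂ 1 = c := by
    simpa [hstate.map_one] using LinearMap.congr_fun hsum 1
  have hcpos : 0 < c := hc ▸ add_pos hψ₁' hψ₂'
  have h : ⇑((ψ₁ 1)⁻¹ • ψ₁) = ⇑φ := by
    refine hext ⟨_, IsState.inv_smul hψ₁ hψ₁', rfl⟩ ⟨_, IsState.inv_smul hψ₂ hψ₂', rfl⟩
      ⟨c⁻¹ * ψ₁ 1, c⁻¹ * ψ₂ 1, by positivity, by positivity, ?_, ?_⟩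
    · rw [← mul_add, hc, inv_mul_cancel₀ hcpos.ne']
    · rw [← inv_smul_smul₀ hcpos.ne' φ, ← hsum]
      ext a
      simp [mul_assoc, hψ₁'.ne', hψ₂'.ne']
  rw [← DFunLike.coe_injective h, smul_inv_smul₀ hψ₁'.ne']

theorem eq_smul_of_le_smul_of_mem_extremePoints {φ ψ : A →ₗ[ℝ] ℝ}
    (hφ : ⇑φ ∈ M.stateSpace.extremePoints ℝ) (hψ : ∀ a ∈ M, 0 ≤ ψ a) {K : ℝ} (hK : 0 < K)
    (hle : ∀ a ∈ M, ψ a ≤ K * φ a) : ψ = ψ 1 • φ := by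
  obtain ⟨φ', hstate, hφ'⟩ := hφ.1
  obtain rfl := DFunLike.coe_injective hφ'
  have hKφ : ∀ a ∈ M, 0 ≤ K * φ' a := fun a ha => mul_nonneg hK.le (hstate.nonneg a ha)
  have hψ₁ : ∀ a ∈ M, K * φ' a ≤ (K • φ' + ψ) a := fun a ha => by
    simpa using hψ a ha
  have hψ₂ : ∀ a ∈ M, K * φ' a ≤ ((2 * K) • φ' - ψ) a := fun a ha => by
    simpa [two_mul, add_mul, add_sub_assoc] using hle a ha
  have hone : 0 < K * φ' 1 := by rwa [hstate.map_one, mul_one]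
  -- Adding multiples of `φ` makes both summands positive at `1`, even if `ψ` vanishes there.
  have h := eq_smul_of_add_eq_smul_of_mem_extremePoints (c := 3 * K) hφ (by module)
    (fun a ha => (hKφ a ha).trans (hψ₁ a ha)) (fun a ha => (hKφ a ha).trans (hψ₂ a ha))
    (hone.trans_le (hψ₁ 1 (one_mem M))) (hone.trans_le (hψ₂ 1 (one_mem M)))
  rwa [LinearMap.add_apply, LinearMap.smul_apply, hstate.map_one, smul_eq_mul, mul_one, add_smul,
    add_right_inj] at h

theorem IsArchimedean.map_mul_of_mem_extremePoints (hM : M.IsArchimedean) {φ : A →ₗ[ℝ] ℝ}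
    (hφ : ⇑φ ∈ M.stateSpace.extremePoints ℝ) (a b : A) : φ (a * b) = φ a * φ b := by
  obtain ⟨φ', hstate, hφ'⟩ := hφ.1
  obtain rfl : φ' = φ := DFunLike.coe_injective hφ'
  have hsq (a b : A) : φ' (a ^ 2 * b) = φ' (a ^ 2) * φ' b := by
    obtain ⟨K, hK, hle⟩ := hM.exists_map_sq_mul_le hstate.nonneg a
    have h := eq_smul_of_le_smul_of_mem_extremePoints (ψ := φ' ∘ₗ LinearMap.mulLeft ℝ (a ^ 2)) hφ
      (fun m hm => hstate.nonneg _ (M.sq_mul_mem a hm)) hK hle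
    simpa using LinearMap.congr_fun h b
  -- Polarize: `4 a = (a + 1) ^ 2 - (a - 1) ^ 2`.
  have hpolar : (4 : ℝ) • a = (a + 1) ^ 2 - (a - 1) ^ 2 := by
    rw [Algebra.smul_def, map_ofNat]
    ring
  have h : φ' ((4 : ℝ) • a * b) = φ' ((4 : ℝ) • a) * φ' b := by
    rw [hpolar, sub_mul, map_sub, map_sub, hsq, hsq, sub_mul]
  rw [smul_mul_assoc, map_smul, map_smul, smul_eq_mul, smul_eq_mul, mul_assoc] at h
  exact mul_left_cancel₀ four_ne_zero h

/-- The **Kadison–Dubois representation theorem**. -/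
theorem IsArchimedean.mem_of_forall_algHom_pos (hM : M.IsArchimedean) {f : A}
    (hf : ∀ φ : A →ₐ[ℝ] ℝ, (∀ m ∈ M, 0 ≤ φ m) → 0 < φ f) : f ∈ M := by
  by_contra hfM
  obtain ⟨φ₀, hφ₀, hφ₀f⟩ := hM.exists_isState_nonpos hfM
  -- The states minimizing the evaluation at `f` form a face, so one of them is extreme.
  let l : StrongDual ℝ (A → ℝ) := -ContinuousLinearMap.proj f
  have hface : IsExposed ℝ M.stateSpace (l.toExposed M.stateSpace) :=
    ContinuousLinearMap.toExposed.isExposed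
  have hcompact := hM.isCompact_stateSpace
  obtain ⟨ψ, hψ, hψmax⟩ :=
    hcompact.exists_isMaxOn ⟨φ₀, φ₀, hφ₀, rfl⟩ l.continuous.continuousOn
  obtain ⟨χ, hχ⟩ := (hface.isCompact hcompact).extremePoints_nonempty ⟨ψ, hψ, hψmax⟩
  have hχext := hface.isExtreme.extremePoints_subset_extremePoints hχ
  have hχf : χ f ≤ φ₀ f := neg_le_neg_iff.1 (hχ.1.2 φ₀ ⟨φ₀, hφ₀, rfl⟩)
  obtain ⟨χ, hstate, rfl⟩ := hχext.1
  have hpos := hf (AlgHom.ofLinearMap χ hstate.map_one (hM.map_mul_of_mem_extremePoints hχext))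
    hstate.nonneg
  exact hpos.not_ge (hχf.trans hφ₀f)

end QuadraticModule

/-! ### Quadratic modules of polynomials -/

open QuadraticModule

namespace IsSOS

variable {σ : Type*} {p q : MvPolynomial σ ℝ}

theorem zero : IsSOS (0 : MvPolynomial σ ℝ) := ⟨0, Fin.elim0, by simp⟩

theorem sq (a : MvPolynomial σ ℝ) : IsSOS (a ^ 2) := ⟨1, fun _ => a, by simp⟩

theorem one : IsSOS (1 : MvPolynomial σ ℝ) := by simpa using sq (1 : MvPolynomial σ ℝ)

theorem add : IsSOS p → IsSOS q → IsSOS (p + q) := by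
  rintro ⟨k, a, rfl⟩ ⟨l, b, rfl⟩
  exact ⟨k + l, Fin.append a b, by simp [Fin.sum_univ_add]⟩

theorem sq_mul (a : MvPolynomial σ ℝ) : IsSOS p → IsSOS (a ^ 2 * p) := by
  rintro ⟨k, b, rfl⟩
  exact ⟨k, fun i => a * b i, by simp only [mul_pow, Finset.mul_sum]⟩

theorem mul_mem {M : QuadraticModule (MvPolynomial σ ℝ)} (hp : IsSOS p) (hq : q ∈ M) :
    p * q ∈ M := by
  obtain ⟨k, a, rfl⟩ := hp
  rw [Finset.sum_mul]
  exact sum_mem fun i _ => M.sq_mul_mem (a i) hq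

theorem mem (M : QuadraticModule (MvPolynomial σ ℝ)) (hp : IsSOS p) : p ∈ M := by
  simpa using hp.mul_mem (one_mem M)

end IsSOS

namespace QuadraticModule

variable {σ τ ι κ : Type*}

/-- The family of polynomials describing the product of the sets described by `g` and `h`. -/
noncomputable def prodFamily (g : ι → MvPolynomial σ ℝ) (h : κ → MvPolynomial τ ℝ) :
    ι ⊕ κ → MvPolynomial (σ ⊕ τ) ℝ :=
  Sum.elim (fun i => MvPolynomial.rename Sum.inl (g i)) fun j => MvPolynomial.rename Sum.inr (h j)

theorem eval_prodFamily_nonneg_iff {g : ι → MvPolynomial σ ℝ} {h : κ → MvPolynomial τ ℝ}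
    {x : σ → ℝ} {u : τ → ℝ} :
    (∀ i, 0 ≤ MvPolynomial.eval (Sum.elim x u) (prodFamily g h i)) ↔
      (∀ i, 0 ≤ MvPolynomial.eval x (g i)) ∧ ∀ j, 0 ≤ MvPolynomial.eval u (h j) := by
  simp [prodFamily, Sum.forall, MvPolynomial.eval_rename, Function.comp_def]

theorem isClosed_setOf_eval_nonneg (G : ι → MvPolynomial σ ℝ) :
    IsClosed {x : σ → ℝ | ∀ i, 0 ≤ MvPolynomial.eval x (G i)} := by
  simp only [Set.ofPred_forall]
  exact isClosed_iInter fun i => isClosed_le continuous_const (MvPolynomial.continuous_eval _)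

variable [Fintype ι] [Fintype κ]

/-- The quadratic module generated by a finite family of polynomials, described by its Putinar
representations `q₀ + ∑ i, q i * G i` with sums of squares as coefficients. -/
def span (G : ι → MvPolynomial σ ℝ) : QuadraticModule (MvPolynomial σ ℝ) where
  carrier := {p | ∃ (q₀ : MvPolynomial σ ℝ) (q : ι → MvPolynomial σ ℝ),
    IsSOS q₀ ∧ (∀ i, IsSOS (q i)) ∧ p = q₀ + ∑ i, q i * G i}
  zero_mem' := ⟨0, 0, .zero, fun _ => .zero, by simp⟩
  one_mem' := ⟨1, 0, .one, fun _ => .zero, by simp⟩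
  add_mem' := by
    rintro _ _ ⟨a, b, ha, hb, rfl⟩ ⟨c, d, hc, hd, rfl⟩
    refine ⟨a + c, b + d, ha.add hc, fun i => (hb i).add (hd i), ?_⟩
    simp only [Pi.add_apply, add_mul, Finset.sum_add_distrib]
    ring
  sq_mul_mem' := by
    rintro a _ ⟨b, c, hb, hc, rfl⟩
    refine ⟨a ^ 2 * b, fun i => a ^ 2 * c i, hb.sq_mul a, fun i => (hc i).sq_mul a, ?_⟩
    simp only [mul_add, Finset.mul_sum, mul_assoc]

variable {G : ι → MvPolynomial σ ℝ} {p : MvPolynomial σ ℝ}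

theorem mem_span : p ∈ span G ↔ ∃ (q₀ : MvPolynomial σ ℝ) (q : ι → MvPolynomial σ ℝ),
    IsSOS q₀ ∧ (∀ i, IsSOS (q i)) ∧ p = q₀ + ∑ i, q i * G i :=
  Iff.rfl

theorem apply_mem_span (G : ι → MvPolynomial σ ℝ) (i : ι) : G i ∈ span G := by
  classical
  refine mem_span.2 ⟨0, Pi.single i 1, .zero, fun j => ?_, by simp [Pi.single_apply]⟩
  rw [Pi.single_apply]
  split_ifs
  exacts [.one, .zero]

theorem mem_of_mem_span {M : QuadraticModule (MvPolynomial σ ℝ)} (hG : ∀ i, G i ∈ M)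
    (hp : p ∈ span G) : p ∈ M := by
  obtain ⟨q₀, q, hq₀, hq, rfl⟩ := mem_span.1 hp
  exact add_mem (hq₀.mem M) (sum_mem fun i _ => (hq i).mul_mem (hG i))

theorem eval_nonneg_of_mem_span {x : σ → ℝ} (hx : ∀ i, 0 ≤ MvPolynomial.eval x (G i))
    (hp : p ∈ span G) : 0 ≤ MvPolynomial.eval x p :=
  mem_of_mem_span (M := (nonneg ℝ).comap (MvPolynomial.eval x)) hx hp

/-- **Putinar's Positivstellensatz**. -/
theorem IsArchimedean.mem_span_of_eval_pos (hG : (span G).IsArchimedean)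
    (hp : ∀ x, (∀ i, 0 ≤ MvPolynomial.eval x (G i)) → 0 < MvPolynomial.eval x p) :
    p ∈ span G := by
  refine hG.mem_of_forall_algHom_pos fun φ hφ => ?_
  have heval (q : MvPolynomial σ ℝ) : φ q = MvPolynomial.eval (fun s => φ (.X s)) q := by
    rw [← MvPolynomial.aeval_eq_eval]
    exact DFunLike.congr_fun (MvPolynomial.aeval_unique φ) q
  rw [heval]
  exact hp _ fun i => heval (G i) ▸ hφ _ (apply_mem_span G i)

theorem isArchimedean_of_X {M : QuadraticModule (MvPolynomial σ ℝ)}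
    (hM : ∀ s, ∃ N : ℝ, MvPolynomial.C N - MvPolynomial.X s ^ 2 ∈ M) : M.IsArchimedean :=
  isArchimedean_of_adjoin_eq_top MvPolynomial.adjoin_range_X (Set.forall_mem_range.2 hM)

theorem isArchimedean_span_of_ball [Fintype σ] {R : ℝ}
    (hG : ∃ i, G i = MvPolynomial.C (R ^ 2) - ∑ s, MvPolynomial.X s ^ 2) :
    (span G).IsArchimedean := by
  classical
  obtain ⟨i, hi⟩ := hG
  refine isArchimedean_of_X fun s => ⟨R ^ 2, ?_⟩
  convert! add_mem (apply_mem_span G i)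
    (sum_mem fun t (_ : t ∈ Finset.univ.erase s) => (span G).sq_mem (.X t)) using 1
  rw [hi, ← Finset.add_sum_erase _ _ (Finset.mem_univ s)]
  ring

theorem IsArchimedean.isCompact_setOf_eval_nonneg (hG : (span G).IsArchimedean) :
    IsCompact {x : σ → ℝ | ∀ i, 0 ≤ MvPolynomial.eval x (G i)} := by
  choose N hN using hG
  have hbox : IsCompact (Set.univ.pi fun s : σ => Set.Icc (-N (-.X s)) (N (.X s))) :=
    isCompact_univ_pi fun _ => isCompact_Icc
  refine hbox.of_isClosed_subset (isClosed_setOf_eval_nonneg G) fun x hx s _ => ?_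
  have hlower := eval_nonneg_of_mem_span hx (hN (-.X s))
  have hupper := eval_nonneg_of_mem_span hx (hN (.X s))
  simp only [MvPolynomial.algebraMap_eq, map_sub, map_neg, MvPolynomial.eval_C,
    MvPolynomial.eval_X] at hlower hupper
  constructor <;> linarith

theorem IsArchimedean.span_prodFamily {g : ι → MvPolynomial σ ℝ} {h : κ → MvPolynomial τ ℝ}
    (hg : (span g).IsArchimedean) (hh : (span h).IsArchimedean) :
    (span (prodFamily g h)).IsArchimedean := by
  have hrename_g {p} (hp : p ∈ span g) : MvPolynomial.rename Sum.inl p ∈ span (prodFamily g h) :=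
    mem_of_mem_span (M := (span (prodFamily g h)).comap (MvPolynomial.rename Sum.inl).toRingHom)
      (fun i => apply_mem_span (prodFamily g h) (.inl i)) hp
  have hrename_h {p} (hp : p ∈ span h) : MvPolynomial.rename Sum.inr p ∈ span (prodFamily g h) :=
    mem_of_mem_span (M := (span (prodFamily g h)).comap (MvPolynomial.rename Sum.inr).toRingHom)
      (fun j => apply_mem_span (prodFamily g h) (.inr j)) hp
  refine isArchimedean_of_X (Sum.forall.2 ⟨fun s => ?_, fun t => ?_⟩)
  · obtain ⟨N, hN⟩ := hg (.X s ^ 2)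
    exact ⟨N, by simpa using hrename_g hN⟩
  · obtain ⟨N, hN⟩ := hh (.X t ^ 2)
    exact ⟨N, by simpa using hrename_h hN⟩

end QuadraticModule

/-! ### Approximation by polynomials in `C¹` -/

section Approximation

open scoped Convolution Pointwise

open ContinuousLinearMap (lsmul)

theorem fderiv_mvPolynomial_eval_apply {ι 𝕜 : Type*} [Fintype ι] [NontriviallyNormedField 𝕜]
    [CompleteSpace 𝕜] (P : MvPolynomial ι 𝕜) (x y : ι → 𝕜) :
    fderiv 𝕜 (fun z => MvPolynomial.eval z P) x y =
      ∑ i, MvPolynomial.eval x (MvPolynomial.pderiv i P) * y i := by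
  classical
  have hdiff (p : MvPolynomial ι 𝕜) : DifferentiableAt 𝕜 (fun z => MvPolynomial.eval z p) x :=
    (AnalyticOnNhd.eval_mvPolynomial p x trivial).differentiableAt
  induction P using MvPolynomial.induction_on with
  | C a => simp
  | add p q hp hq =>
    simp only [map_add, add_mul, Finset.sum_add_distrib, ← hp, ← hq,
      fderiv_fun_add (hdiff p) (hdiff q), add_apply]
  | mul_X p j hp =>
    have hX : fderiv 𝕜 (fun z : ι → 𝕜 => z j) x y = y j := by
      rw [(hasFDerivAt_apply (𝕜 := 𝕜) j x).fderiv, ContinuousLinearMap.proj_apply]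
    simp only [map_mul, MvPolynomial.eval_X, fderiv_fun_mul (hdiff p) (differentiableAt_apply j x),
      add_apply, smul_apply, smul_eq_mul, hX, hp,
      Derivation.leibniz, MvPolynomial.pderiv_X, map_add, add_mul, Finset.sum_add_distrib,
      Finset.mul_sum, mul_assoc]
    simp [Pi.single_apply]

theorem norm_convolution_sub_convolution_le {G E : Type*} [AddCommGroup G] [TopologicalSpace G]
    [IsTopologicalAddGroup G] [MeasurableSpace G] [BorelSpace G] [NormedAddCommGroup E]
    [NormedSpace ℝ E] {μ : Measure G} [IsFiniteMeasureOnCompacts μ] [μ.IsAddLeftInvariant]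
    [μ.IsNegInvariant] {K : Set G} {p φ : G → ℝ} {f : G → E} (hp : Continuous p)
    (hφ : Continuous φ) (hf : Continuous f) (hcf : HasCompactSupport f) {η : ℝ}
    (h : ∀ t ∈ K - tsupport f, |p t - φ t| ≤ η) {x : G} (hx : x ∈ K) :
    ‖(p ⋆[lsmul ℝ ℝ, μ] f) x - (φ ⋆[lsmul ℝ ℝ, μ] f) x‖ ≤ η * ∫ t, ‖f t‖ ∂μ := by
  have hcx : HasCompactSupport fun t => f (x - t) := hcf.comp_homeomorph (Homeomorph.subLeft x)
  have hfx : Continuous fun t => f (x - t) := by fun_prop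
  have hint (q : G → ℝ) (hq : Continuous q) : Integrable (fun t => q t • f (x - t)) μ :=
    (hq.smul hfx).integrable_of_hasCompactSupport hcx.smul_left
  rw [convolution_lsmul, convolution_lsmul, ← integral_sub (hint p hp) (hint φ hφ),
    ← integral_sub_left_eq_self (fun t => ‖f t‖) μ x, ← integral_const_mul]
  refine norm_integral_le_of_norm_le
    ((hfx.norm.integrable_of_hasCompactSupport hcx.norm).const_mul η) (ae_of_all _ fun t => ?_)
  rw [← sub_smul, norm_smul, Real.norm_eq_abs]
  by_cases ht : f (x - t) = 0
  · simp [ht]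
  · have hmem : t ∈ K - tsupport f := ⟨x, hx, x - t, subset_tsupport f ht, sub_sub_cancel x t⟩
    exact mul_le_mul_of_nonneg_right (h t hmem) (norm_nonneg _)

theorem convolution_prodMk {G E E' : Type*} [Sub G] [MeasurableSpace G] [NormedAddCommGroup E]
    [NormedSpace ℝ E] [CompleteSpace E] [NormedAddCommGroup E'] [NormedSpace ℝ E']
    [CompleteSpace E'] {μ : Measure G} {p : G → ℝ} {f : G → E} {f' : G → E'} {x : G}
    (hf : ConvolutionExistsAt p f x (lsmul ℝ ℝ) μ)
    (hf' : ConvolutionExistsAt p f' x (lsmul ℝ ℝ) μ) :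
    (p ⋆[lsmul ℝ ℝ, μ] fun t => (f t, f' t)) x =
      ((p ⋆[lsmul ℝ ℝ, μ] f) x, (p ⋆[lsmul ℝ ℝ, μ] f') x) :=
  integral_pair hf hf'

theorem fderiv_convolution_right {G F : Type*} [NormedAddCommGroup G] [NormedSpace ℝ G]
    [MeasurableSpace G] [BorelSpace G] [NormedAddCommGroup F] [NormedSpace ℝ F] {μ : Measure G}
    [SFinite μ] [μ.IsAddLeftInvariant] {p : G → ℝ} {f : G → F} (hp : LocallyIntegrable p μ)
    (hf : ContDiff ℝ 1 f) (hcf : HasCompactSupport f) (x : G) :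
    fderiv ℝ (p ⋆[lsmul ℝ ℝ, μ] f) x = (p ⋆[lsmul ℝ ℝ, μ] fderiv ℝ f) x := by
  rw [(hcf.hasFDerivAt_convolution_right (lsmul ℝ ℝ) hp hf x).fderiv]
  rfl

variable {ι : Type*} {K : Set (ι → ℝ)}

/-- The **Stone–Weierstrass theorem** for polynomials in several variables. -/
theorem exists_mvPolynomial_near (hK : IsCompact K) {f : (ι → ℝ) → ℝ} (hf : Continuous f)
    {ε : ℝ} (hε : 0 < ε) :
    ∃ P : MvPolynomial ι ℝ, ∀ x ∈ K, |MvPolynomial.eval x P - f x| < ε := by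
  let Φ : MvPolynomial ι ℝ →ₐ[ℝ] C(ι → ℝ, ℝ) :=
    MvPolynomial.aeval fun i => ⟨fun x => x i, continuous_apply i⟩
  have hΦ (P x) : Φ P x = MvPolynomial.eval x P := by
    induction P using MvPolynomial.induction_on with
    | C a => simp [Φ]
    | add p q hp hq => rw [map_add, ContinuousMap.add_apply, hp, hq, map_add]
    | mul_X p j hp => rw [map_mul, ContinuousMap.mul_apply, hp, map_mul]; simp [Φ]
  have hsep : Φ.range.SeparatesPoints := by
    intro x y hxy
    obtain ⟨i, hi⟩ := Function.ne_iff.1 hxy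
    exact ⟨_, ⟨Φ (.X i), ⟨_, rfl⟩, rfl⟩, by simpa [hΦ] using hi⟩
  obtain ⟨_, ⟨P, rfl⟩, hP⟩ :=
    ContinuousMap.exists_mem_subalgebra_near_continuous_of_isCompact_of_separatesPoints
      hsep ⟨f, hf⟩ hK hε
  refine ⟨P, fun x hx => ?_⟩
  rw [← hΦ]
  exact hP x hx

variable [Fintype ι]

theorem exists_mvPolynomial_eval_eq_convolution (p : MvPolynomial ι ℝ) {f : (ι → ℝ) → ℝ}
    (hf : Continuous f) (hcf : HasCompactSupport f) :
    ∃ Q : MvPolynomial ι ℝ, ∀ x,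
      MvPolynomial.eval x Q = ((fun t => MvPolynomial.eval t p) ⋆[lsmul ℝ ℝ, volume] f) x := by
  simp only [convolution_lsmul_swap, smul_eq_mul]
  have hint (q : MvPolynomial ι ℝ) {f : (ι → ℝ) → ℝ} (x : ι → ℝ) (hf : Continuous f)
      (hcf : HasCompactSupport f) : Integrable fun t => MvPolynomial.eval (x - t) q * f t := by
    have hq := MvPolynomial.continuous_eval q
    exact Continuous.integrable_of_hasCompactSupport (by fun_prop) hcf.mul_left
  induction p using MvPolynomial.induction_on generalizing f with
  | C a => exact ⟨.C (a * ∫ t, f t), fun x => by simp [integral_const_mul]⟩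
  | add p q hp hq =>
    obtain ⟨P, hP⟩ := hp hf hcf
    obtain ⟨Q, hQ⟩ := hq hf hcf
    refine ⟨P + Q, fun x => ?_⟩
    rw [map_add, hP, hQ, ← integral_add (hint p x hf hcf) (hint q x hf hcf)]
    simp only [map_add, add_mul]
  | mul_X p i hp =>
    have hf' : Continuous fun t : ι → ℝ => t i * f t := by fun_prop
    have hcf' : HasCompactSupport fun t : ι → ℝ => t i * f t := hcf.mul_left
    obtain ⟨P, hP⟩ := hp hf hcf
    obtain ⟨Q, hQ⟩ := hp hf' hcf'
    refine ⟨.X i * P - Q, fun x => ?_⟩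
    rw [map_sub, map_mul, MvPolynomial.eval_X, hP, hQ, ← integral_const_mul,
      ← integral_sub ((hint p x hf hcf).const_mul _) (hint p x hf' hcf')]
    congr 1
    funext t
    simp only [map_mul, MvPolynomial.eval_X, Pi.sub_apply]
    ring

theorem exists_mvPolynomial_convolution_near {E : Type*} [NormedAddCommGroup E] [NormedSpace ℝ E]
    [CompleteSpace E] (hK : IsCompact K) {f : (ι → ℝ) → E} (hf : Continuous f)
    (hcf : HasCompactSupport f) {ε : ℝ} (hε : 0 < ε) :
    ∃ p : MvPolynomial ι ℝ, ∀ x ∈ K,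
      ‖((fun t => MvPolynomial.eval t p) ⋆[lsmul ℝ ℝ, volume] f) x - f x‖ ≤ ε := by
  obtain ⟨δ, hδ, hfδ⟩ := Metric.uniformContinuous_iff.1
    (hcf.uniformContinuous_of_continuous hf) (ε / 2) (half_pos hε)
  let b : ContDiffBump (0 : ι → ℝ) := ⟨δ / 2, δ, half_pos hδ, half_lt_self hδ⟩
  obtain ⟨η, hη, hηf⟩ := exists_pos_mul_lt (half_pos hε) (∫ t, ‖f t‖)
  have hcompact : IsCompact (K - tsupport f) := by
    rw [sub_eq_add_neg]
    exact hK.add hcf.isCompact.neg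
  obtain ⟨p, hp⟩ := exists_mvPolynomial_near hcompact (b.continuous_normed (μ := volume)) hη
  refine ⟨p, fun x hx => ?_⟩
  have hkernel := norm_convolution_sub_convolution_le (μ := volume)
    (MvPolynomial.continuous_eval p) b.continuous_normed hf hcf (fun t ht => (hp t ht).le) hx
  have hmollify := b.dist_normed_convolution_le (μ := volume) (x₀ := x)
    hf.aestronglyMeasurable fun y hy => (hfδ (Metric.mem_ball.1 hy)).le
  rw [dist_eq_norm] at hmollify
  calc _ ≤ _ := norm_sub_le_norm_sub_add_norm_sub _ _ _
    _ ≤ η * (∫ t, ‖f t‖) + ε / 2 := add_le_add hkernel hmollify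
    _ ≤ ε := by linarith

theorem exists_mvPolynomial_fderiv_near_of_hasCompactSupport (hK : IsCompact K)
    {f : (ι → ℝ) → ℝ} (hf : ContDiff ℝ 1 f) (hcf : HasCompactSupport f) {ε : ℝ} (hε : 0 < ε) :
    ∃ P : MvPolynomial ι ℝ, ∀ x ∈ K, |MvPolynomial.eval x P - f x| ≤ ε ∧
      ‖fderiv ℝ (fun y => MvPolynomial.eval y P) x - fderiv ℝ f x‖ ≤ ε := by
  have hf' : Continuous (fderiv ℝ f) := hf.continuous_fderiv one_ne_zero
  have hcf' : HasCompactSupport (fderiv ℝ f) := hcf.fderiv ℝ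
  -- Approximating the 1-jet of `f` handles the values and the derivatives simultaneously.
  obtain ⟨p, hp⟩ := exists_mvPolynomial_convolution_near hK (hf.continuous.prodMk hf')
    (hcf.comp₂_left hcf' (m := Prod.mk) rfl) hε
  obtain ⟨Q, hQ⟩ := exists_mvPolynomial_eval_eq_convolution p hf.continuous hcf
  refine ⟨Q, fun x hx => ?_⟩
  have hpc := (MvPolynomial.continuous_eval p).locallyIntegrable (μ := volume)
  have h := hp x hx
  rw [convolution_prodMk (hcf.convolutionExists_right _ hpc hf.continuous x)
    (hcf'.convolutionExists_right _ hpc hf' x), Prod.mk_sub_mk, norm_prod_le_iff,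
    ← fderiv_convolution_right hpc hf hcf, ← funext hQ] at h
  exact h

theorem exists_mvPolynomial_fderiv_near (hK : IsCompact K) {v : (ι → ℝ) → ℝ}
    (hv : ContDiff ℝ 1 v) {ε : ℝ} (hε : 0 < ε) :
    ∃ P : MvPolynomial ι ℝ, ∀ x ∈ K, |MvPolynomial.eval x P - v x| ≤ ε ∧
      ‖fderiv ℝ (fun y => MvPolynomial.eval y P) x - fderiv ℝ v x‖ ≤ ε := by
  obtain ⟨R, hR, hKR⟩ := hK.isBounded.subset_ball_lt 0 0
  let b : ContDiffBump (0 : ι → ℝ) := ⟨R, R + 1, hR, lt_add_one R⟩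
  obtain ⟨P, hP⟩ := exists_mvPolynomial_fderiv_near_of_hasCompactSupport hK
    (b.contDiff.mul hv) b.hasCompactSupport.mul_right hε
  refine ⟨P, fun x hx => ?_⟩
  have hev : (fun y => b y * v y) =ᶠ[nhds x] v := by
    filter_upwards [b.eventuallyEq_one_of_mem_ball (hKR hx)] with y hy
    simp [hy]
  have h := hP x hx
  rwa [hev.fderiv_eq, hev.eq_of_nhds] at h

end Approximation

/-! ### The dual LP and its SOS hierarchy -/

section Hierarchy

variable {n m nX nU : ℕ} {g : Fin nX → MvPolynomial (Fin n) ℝ}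
  {h : Fin nU → MvPolynomial (Fin m) ℝ} {F : Fin n → MvPolynomial (Fin n ⊕ Fin m) ℝ} {β : ℝ}

/-- The polynomial `β v - ∇v · f`, whose nonnegativity on `X × U` is the dynamic constraint of the
dual LP. -/
noncomputable def dissipation (F : Fin n → MvPolynomial (Fin n ⊕ Fin m) ℝ) (β : ℝ)
    (v : MvPolynomial (Fin n) ℝ) : MvPolynomial (Fin n ⊕ Fin m) ℝ :=
  MvPolynomial.C β * MvPolynomial.rename Sum.inl v
    - ∑ i, MvPolynomial.rename Sum.inl (MvPolynomial.pderiv i v) * F i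

theorem eval_dissipation (v : MvPolynomial (Fin n) ℝ) (x : Fin n → ℝ) (u : Fin m → ℝ) :
    MvPolynomial.eval (Sum.elim x u) (dissipation F β v) = β * MvPolynomial.eval x v -
      fderiv ℝ (fun y => MvPolynomial.eval y v) x (polyMapEval F x u) := by
  simp [dissipation, fderiv_mvPolynomial_eval_apply, MvPolynomial.eval_rename, polyMapEval]

theorem continuous_polyMapEval :
    Continuous fun z : (Fin n → ℝ) × (Fin m → ℝ) => polyMapEval F z.1 z.2 := by
  refine continuous_pi fun i => (MvPolynomial.continuous_eval (F i)).comp (continuous_pi ?_)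
  rintro (s | s)
  · exact (continuous_apply s).comp continuous_fst
  · exact (continuous_apply s).comp continuous_snd

theorem KFeasC.mono {k l : ℕ} (hkl : k ≤ l) {v w : MvPolynomial (Fin n) ℝ}
    (hvw : KFeasC g h F β k v w) : KFeasC g h F β l v w := by
  have hdeg : 2 * k ≤ 2 * l := Nat.mul_le_mul_left 2 hkl
  have hdegF := Nat.mul_le_mul_right (max 1 (Finset.univ.sup fun i => (F i).totalDegree)) hdeg
  obtain ⟨hv, hw, q₀, q, r, p₀, p, s₀, s, hq₀, hq, hr, hp₀, hp, hs₀, hs,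
    dq₀, dq, dr, dp₀, dp, ds₀, ds, heq⟩ := hvw
  exact ⟨hv.trans hdeg, hw.trans hdeg, q₀, q, r, p₀, p, s₀, s, hq₀, hq, hr, hp₀, hp, hs₀, hs,
    dq₀.trans hdegF, fun i => (dq i).trans hdegF, fun j => (dr j).trans hdegF, dp₀.trans hdeg,
    fun i => (dp i).trans hdeg, ds₀.trans hdeg, fun i => (ds i).trans hdeg, heq⟩

theorem kFeasC_zero_one (k : ℕ) : KFeasC g h F β k 0 1 :=
  ⟨by simp, by simp, 0, 0, 0, 0, 0, 1, 0, .zero, fun _ => .zero, fun _ => .zero,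
    .zero, fun _ => .zero, .one, fun _ => .zero, by simp, by simp, by simp,
    by simp, by simp, by simp, by simp, by simp, by simp, by simp⟩

theorem KFeasC.mem_span {k : ℕ} {v w : MvPolynomial (Fin n) ℝ} (hvw : KFeasC g h F β k v w) :
    dissipation F β v ∈ span (prodFamily g h) ∧ w - v - 1 ∈ span g ∧ w ∈ span g := by
  obtain ⟨-, -, q₀, q, r, p₀, p, s₀, s, hq₀, hq, hr, hp₀, hp, hs₀, hs,
    -, -, -, -, -, -, -, hdiss, hgap, hw⟩ := hvw
  refine ⟨QuadraticModule.mem_span.2 ⟨q₀, Sum.elim q r, hq₀, Sum.forall.2 ⟨hq, hr⟩, ?_⟩,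
    QuadraticModule.mem_span.2 ⟨p₀, p, hp₀, hp, hgap⟩,
    QuadraticModule.mem_span.2 ⟨s₀, s, hs₀, hs, hw⟩⟩
  rw [Fintype.sum_sum_type, ← add_assoc]
  exact hdiss

theorem eventually_kFeasC_of_mem_span {v w : MvPolynomial (Fin n) ℝ}
    (hdiss : dissipation F β v ∈ span (prodFamily g h)) (hgap : w - v - 1 ∈ span g)
    (hw : w ∈ span g) : ∀ᶠ k in Filter.atTop, KFeasC g h F β k v w := by
  have hdeg {σ : Type} (p : MvPolynomial σ ℝ) :
      ∀ᶠ k : ℕ in Filter.atTop, p.totalDegree ≤ 2 * k := by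
    filter_upwards [Filter.eventually_ge_atTop p.totalDegree] with k hk
    omega
  have hdegF (p : MvPolynomial (Fin n ⊕ Fin m) ℝ) : ∀ᶠ k : ℕ in Filter.atTop,
      p.totalDegree ≤ 2 * k * max 1 (Finset.univ.sup fun i => (F i).totalDegree) := by
    filter_upwards [hdeg p] with k hk
    exact hk.trans (Nat.le_mul_of_pos_right _ (by positivity))
  obtain ⟨q₀, q, hq₀, hq, hdiss⟩ := mem_span.1 hdiss
  obtain ⟨p₀, p, hp₀, hp, hgap⟩ := mem_span.1 hgap
  obtain ⟨s₀, s, hs₀, hs, hw⟩ := mem_span.1 hw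
  rw [Fintype.sum_sum_type, ← add_assoc] at hdiss
  filter_upwards [hdeg v, hdeg w, hdegF q₀, Filter.eventually_all.2 fun i => hdegF (q (.inl i) * _),
    Filter.eventually_all.2 fun j => hdegF (q (.inr j) * _), hdeg p₀,
    Filter.eventually_all.2 fun i => hdeg (p i * g i), hdeg s₀,
    Filter.eventually_all.2 fun i => hdeg (s i * g i)] with k hv hw' dq₀ dq dr dp₀ dp ds₀ ds
  exact ⟨hv, hw', q₀, fun i => q (.inl i), fun j => q (.inr j), p₀, p, s₀, s, hq₀,
    fun i => hq _, fun j => hq _, hp₀, hp, hs₀, hs, dq₀, dq, dr, dp₀, dp, ds₀, ds,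
    hdiss, hgap, hw⟩

theorem KFeasC.dualFeasC {k : ℕ} {v w : MvPolynomial (Fin n) ℝ} (hvw : KFeasC g h F β k v w) :
    DualFeasC g h F β (fun x => MvPolynomial.eval x v) (fun x => MvPolynomial.eval x w) := by
  obtain ⟨hdiss, hgap, hw⟩ := hvw.mem_span
  refine ⟨(AnalyticOnNhd.eval_mvPolynomial v).contDiff, MvPolynomial.continuous_eval w,
    fun x hx u hu => ?_, fun x hx => ?_, fun x hx => eval_nonneg_of_mem_span hx hw⟩
  · have hnonneg := eval_nonneg_of_mem_span (eval_prodFamily_nonneg_iff.2 ⟨hx, hu⟩) hdiss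
    rwa [eval_dissipation, sub_nonneg] at hnonneg
  · have hnonneg := eval_nonneg_of_mem_span hx hgap
    rw [map_sub, map_sub, map_one] at hnonneg
    linarith

/-- Every constraint of the dual LP holds at `(v, w)` with slack `η`. For `η > 0` these are the
Slater points of the LP. -/
structure DualSlackC (g : Fin nX → MvPolynomial (Fin n) ℝ) (h : Fin nU → MvPolynomial (Fin m) ℝ)
    (F : Fin n → MvPolynomial (Fin n ⊕ Fin m) ℝ) (β η : ℝ) (v w : (Fin n → ℝ) → ℝ) : Prop where
  fderiv_add_le : ∀ x ∈ semiSet g, ∀ u ∈ semiSet h,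
    fderiv ℝ v x (polyMapEval F x u) + η ≤ β * v x
  add_one_add_le : ∀ x ∈ semiSet g, v x + 1 + η ≤ w x
  le : ∀ x ∈ semiSet g, η ≤ w x

theorem DualFeasC.dualSlackC_add_const {v w : (Fin n → ℝ) → ℝ} (hvw : DualFeasC g h F β v w)
    {γ : ℝ} (hγ : 0 ≤ γ) :
    DualSlackC g h F β (min γ (|β| * γ)) (fun x => v x + SignType.sign β * γ)
      (fun x => w x + 2 * γ) := by
  obtain ⟨-, -, hdiss, hgap, hw⟩ := hvw
  have hmin : min γ (|β| * γ) ≤ γ := min_le_left _ _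
  refine ⟨fun x hx u hu => ?_, fun x hx => ?_, fun x hx => by linarith [hw x hx]⟩
  · rw [fderiv_add_const, mul_add, ← mul_assoc, self_mul_sign]
    exact add_le_add (hdiss x hx u hu) (min_le_right _ _)
  · have hsign : (SignType.sign β : ℝ) * γ ≤ γ :=
      mul_le_of_le_one_left hγ (by rcases SignType.sign β <;> simp)
    linarith [hgap x hx]

theorem DualSlackC.of_near {η ε B : ℝ} {v w V W : (Fin n → ℝ) → ℝ}
    (hvw : DualSlackC g h F β η v w)
    (hB : ∀ x ∈ semiSet g, ∀ u ∈ semiSet h, ‖polyMapEval F x u‖ ≤ B)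
    (hv : ∀ x ∈ semiSet g, |V x - v x| ≤ ε)
    (hv' : ∀ x ∈ semiSet g, ‖fderiv ℝ V x - fderiv ℝ v x‖ ≤ ε)
    (hw : ∀ x ∈ semiSet g, |W x - w x| ≤ ε) :
    DualSlackC g h F β (η - ε * max 2 (|β| + B)) V W := by
  have hε {x} (hx : x ∈ semiSet g) : 0 ≤ ε := (abs_nonneg _).trans (hv x hx)
  have htwo {x} (hx : x ∈ semiSet g) : ε * 2 ≤ ε * max 2 (|β| + B) :=
    mul_le_mul_of_nonneg_left (le_max_left _ _) (hε hx)
  refine ⟨fun x hx u hu => ?_, fun x hx => ?_, fun x hx => ?_⟩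
  · have hsum : ε * (|β| + B) ≤ ε * max 2 (|β| + B) :=
      mul_le_mul_of_nonneg_left (le_max_right _ _) (hε hx)
    have hvalue : |β * V x - β * v x| ≤ |β| * ε := by
      rw [← mul_sub, abs_mul]
      exact mul_le_mul_of_nonneg_left (hv x hx) (abs_nonneg β)
    have hderiv : |fderiv ℝ V x (polyMapEval F x u) - fderiv ℝ v x (polyMapEval F x u)| ≤ ε * B :=
      ContinuousLinearMap.le_of_opNorm_le_of_le (fderiv ℝ V x - fderiv ℝ v x) (hv' x hx)
        (hB x hx u hu)
    linarith [abs_le.1 hvalue, abs_le.1 hderiv, hvw.fderiv_add_le x hx u hu]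
  · linarith [htwo hx, abs_le.1 (hv x hx), abs_le.1 (hw x hx), hvw.add_one_add_le x hx]
  · linarith [htwo hx, hε hx, abs_le.1 (hw x hx), hvw.le x hx]

theorem DualSlackC.exists_mvPolynomial (hX : IsCompact (semiSet g)) (hU : IsCompact (semiSet h))
    {η : ℝ} (hη : 0 < η) {v w : (Fin n → ℝ) → ℝ} (hv : ContDiff ℝ 1 v) (hw : Continuous w)
    (hvw : DualSlackC g h F β η v w) {δ : ℝ} (hδ : 0 < δ) :
    ∃ V W : MvPolynomial (Fin n) ℝ, (∃ η' > 0, DualSlackC g h F β η'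
        (fun x => MvPolynomial.eval x V) (fun x => MvPolynomial.eval x W)) ∧
      ∀ x ∈ semiSet g, MvPolynomial.eval x W ≤ w x + δ := by
  obtain ⟨B, hB⟩ := (hX.prod hU).exists_bound_of_continuousOn
    (continuous_polyMapEval (F := F)).continuousOn
  obtain ⟨ε, hε, hεη⟩ := exists_pos_mul_lt hη (max 2 (|β| + B))
  obtain ⟨V, hV⟩ := exists_mvPolynomial_fderiv_near hX hv hε
  obtain ⟨W, hW⟩ := exists_mvPolynomial_near hX hw (lt_min hε hδ)
  refine ⟨V, W, ⟨η - ε * max 2 (|β| + B), by linarith, hvw.of_near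
    (fun x hx u hu => hB (x, u) ⟨hx, hu⟩) (fun x hx => (hV x hx).1) (fun x hx => (hV x hx).2)
    fun x hx => (hW x hx).le.trans (min_le_left _ _)⟩, fun x hx => ?_⟩
  linarith [abs_lt.1 (hW x hx), min_le_right ε δ]

theorem DualSlackC.eventually_kFeasC (hg : (span g).IsArchimedean) (hh : (span h).IsArchimedean)
    {η : ℝ} (hη : 0 < η) {v w : MvPolynomial (Fin n) ℝ}
    (hvw : DualSlackC g h F β η (fun x => MvPolynomial.eval x v) (fun x => MvPolynomial.eval x w)) :
    ∀ᶠ k in Filter.atTop, KFeasC g h F β k v w := by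
  refine eventually_kFeasC_of_mem_span ((hg.span_prodFamily hh).mem_span_of_eval_pos fun z hz => ?_)
    (hg.mem_span_of_eval_pos fun x hx => ?_)
    (hg.mem_span_of_eval_pos fun x hx => hη.trans_le (hvw.le x hx))
  · obtain ⟨⟨x, u⟩, rfl⟩ := (Equiv.sumArrowEquivProdArrow _ _ _).symm.surjective z
    obtain ⟨hx, hu⟩ := eval_prodFamily_nonneg_iff.1 hz
    change 0 < MvPolynomial.eval (Sum.elim x u) _
    rw [eval_dissipation]
    linarith [hvw.fderiv_add_le x hx u hu]
  · rw [map_sub, map_sub, map_one]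
    linarith [hvw.add_one_add_le x hx]

theorem DualFeasC.integral_nonneg {v w : (Fin n → ℝ) → ℝ} (hvw : DualFeasC g h F β v w) :
    0 ≤ ∫ x in semiSet g, w x :=
  setIntegral_nonneg (isClosed_setOf_eval_nonneg g).measurableSet hvw.2.2.2.2

theorem dualValC_le {v w : (Fin n → ℝ) → ℝ} (hvw : DualFeasC g h F β v w) :
    dualValC g h F β ≤ ∫ x in semiSet g, w x :=
  csInf_le ⟨0, by rintro _ ⟨v, w, hvw, rfl⟩; exact hvw.integral_nonneg⟩ ⟨v, w, hvw, rfl⟩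

theorem exists_dualFeasC_of_dualValC_lt {c : ℝ} (hc : dualValC g h F β < c) :
    ∃ v w, DualFeasC g h F β v w ∧ ∫ x in semiSet g, w x < c := by
  obtain ⟨_, ⟨v, w, hvw, rfl⟩, hlt⟩ :=
    exists_lt_of_csInf_lt (by exact ⟨_, _, _, (kFeasC_zero_one 0).dualFeasC, rfl⟩) hc
  exact ⟨v, w, hvw, hlt⟩

theorem sosValC_le {k : ℕ} {v w : MvPolynomial (Fin n) ℝ} (hvw : KFeasC g h F β k v w) :
    sosValC g h F β k ≤ ∫ x in semiSet g, MvPolynomial.eval x w :=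
  csInf_le ⟨0, by rintro _ ⟨v, w, hvw, rfl⟩; exact hvw.dualFeasC.integral_nonneg⟩ ⟨v, w, hvw, rfl⟩

theorem le_sosValC {k : ℕ} {c : ℝ}
    (hc : ∀ v w, KFeasC g h F β k v w → c ≤ ∫ x in semiSet g, MvPolynomial.eval x w) :
    c ≤ sosValC g h F β k :=
  le_csInf ⟨_, 0, 1, kFeasC_zero_one k, rfl⟩ (by rintro _ ⟨v, w, hvw, rfl⟩; exact hc v w hvw)

theorem antitone_sosValC : Antitone (sosValC g h F β) := fun _ _ hkl =>
  le_sosValC fun _ _ hvw => sosValC_le (hvw.mono hkl)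

theorem dualValC_le_sosValC (k : ℕ) : dualValC g h F β ≤ sosValC g h F β k :=
  le_sosValC fun _ _ hvw => dualValC_le hvw.dualFeasC

theorem exists_kFeasC_le_add (hβ : β ≠ 0) (hg : (span g).IsArchimedean)
    (hh : (span h).IsArchimedean) {v w : (Fin n → ℝ) → ℝ} (hvw : DualFeasC g h F β v w) {δ : ℝ}
    (hδ : 0 < δ) :
    ∃ V W, (∀ᶠ k in Filter.atTop, KFeasC g h F β k V W) ∧
      ∀ x ∈ semiSet g, MvPolynomial.eval x W ≤ w x + δ := by
  have hγ : 0 < δ / 4 := by positivity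
  obtain ⟨V, W, ⟨η, hη, hVW⟩, hW⟩ := (hvw.dualSlackC_add_const hγ.le).exists_mvPolynomial
    hg.isCompact_setOf_eval_nonneg hh.isCompact_setOf_eval_nonneg
    (lt_min hγ (mul_pos (abs_pos.2 hβ) hγ)) (hvw.1.add contDiff_const) (hvw.2.1.add_const _)
    (half_pos hδ)
  exact ⟨V, W, hVW.eventually_kFeasC hg hh hη, fun x hx => (hW x hx).trans_eq (by ring)⟩

theorem eventually_sosValC_lt (hβ : β ≠ 0) (hg : (span g).IsArchimedean)
    (hh : (span h).IsArchimedean) {c : ℝ} (hc : dualValC g h F β < c) :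
    ∀ᶠ k in Filter.atTop, sosValC g h F β k < c := by
  have hX : IsCompact (semiSet g) := hg.isCompact_setOf_eval_nonneg
  obtain ⟨v, w, hvw, hlt⟩ := exists_dualFeasC_of_dualValC_lt hc
  obtain ⟨δ, hδ, hδc⟩ := exists_pos_mul_lt (sub_pos.2 hlt) (volume.real (semiSet g))
  obtain ⟨V, W, hVW, hW⟩ := exists_kFeasC_le_add hβ hg hh hvw hδ
  filter_upwards [hVW] with k hk
  have hint {f : (Fin n → ℝ) → ℝ} (hf : Continuous f) : IntegrableOn f (semiSet g) :=
    hf.continuousOn.integrableOn_compact hX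
  calc sosValC g h F β k ≤ ∫ x in semiSet g, MvPolynomial.eval x W := sosValC_le hk
    _ ≤ ∫ x in semiSet g, (w x + δ) := setIntegral_mono_on (hint (MvPolynomial.continuous_eval W))
        (hint (hvw.2.1.add_const δ)) hX.measurableSet hW
    _ = (∫ x in semiSet g, w x) + volume.real (semiSet g) * δ := by
        rw [integral_add (hint hvw.2.1) (hint continuous_const), setIntegral_const, smul_eq_mul]
    _ < c := by linarith

end Hierarchy

theorem sos_hierarchy_converges_continuous_general {n m nX nU : ℕ}
    {g : Fin nX → MvPolynomial (Fin n) ℝ} {h : Fin nU → MvPolynomial (Fin m) ℝ}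
    (F : Fin n → MvPolynomial (Fin n ⊕ Fin m) ℝ) {β : ℝ} (hβ : β ≠ 0)
    (hg : (span g).IsArchimedean) (hh : (span h).IsArchimedean) :
    (∀ k, sosValC g h F β (k + 1) ≤ sosValC g h F β k) ∧
    (∀ k, dualValC g h F β ≤ sosValC g h F β k) ∧
    Filter.Tendsto (fun k => sosValC g h F β k) Filter.atTop (nhds (dualValC g h F β)) :=
  ⟨fun k => antitone_sosValC k.le_succ, dualValC_le_sosValC, tendsto_order.2
    ⟨fun _ hc => .of_forall fun k => hc.trans_le (dualValC_le_sosValC k),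
      fun _ hc => eventually_sosValC_lt hβ hg hh hc⟩⟩

/-- The continuous-time dual SOS values converge monotonically from above to the
optimal value of the continuous-time dual LP. -/
theorem sos_hierarchy_converges_continuous {n m nX nU : ℕ}
    (g : Fin nX → MvPolynomial (Fin n) ℝ) (h : Fin nU → MvPolynomial (Fin m) ℝ)
    (F : Fin n → MvPolynomial (Fin n ⊕ Fin m) ℝ)
    (β : ℝ) (hβ : 0 < β)
    (RX RU : ℝ) (hRX : 0 < RX) (hRU : 0 < RU)
    -- Assumption 1: one of the gᵢ (resp. hⱼ) is the ball constraint R² − ‖·‖²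
    (hgball : ∃ i, g i = MvPolynomial.C (RX ^ 2) - ∑ j : Fin n, (MvPolynomial.X j) ^ 2)
    (hhball : ∃ j, h j = MvPolynomial.C (RU ^ 2) - ∑ i : Fin m, (MvPolynomial.X i) ^ 2) :
    (∀ k, sosValC g h F β (k + 1) ≤ sosValC g h F β k) ∧
    (∀ k, dualValC g h F β ≤ sosValC g h F β k) ∧
    Filter.Tendsto (fun k => sosValC g h F β k) Filter.atTop (nhds (dualValC g h F β)) :=
  sos_hierarchy_converges_continuous_general F hβ.ne' (isArchimedean_span_of_ball hgball)
    (isArchimedean_span_of_ball hhball)
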